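/- Let n ≥ 1 and d ∈ ℝ^n with d > 0 entrywise. The following are equivalent: (i) d is stable, i.e., the map I ↦ ∑_{i∈I} d_i on subsets I ⊆ {1,…,n} is injective; (ii) for all x, y ∈ ℝ^n, if x ≺_d y and y ≺_d x then x = y (i.e., thermomajorization ≺_d is antisymmetric and hence a partial order). -/

import Mathlib

open Finset

noncomputable def th {n : ℕ} (d y : Fin n → ℝ) (c : ℝ) : ℝ :=
  sInf ((fun i => (∑ j, max (y j - y i / d i * d j) 0) + y i / d i * c) ''
    {i : Fin n | 0 < d i})

noncomputable def psum {n : ℕ} (d : Fin n → ℝ) (σ : Equiv.Perm (Fin n)) (j : ℕ) : ℝ :=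
  ∑ i ∈ Finset.univ.filter (fun i : Fin n => (i : ℕ) < j), d (σ i)

noncomputable def Emap {n : ℕ} (d y : Fin n → ℝ) (σ : Equiv.Perm (Fin n)) : Fin n → ℝ :=
  fun k => th d y (psum d σ ((σ.symm k : ℕ) + 1)) - th d y (psum d σ (σ.symm k : ℕ))

def dStoch {n : ℕ} (d : Fin n → ℝ) (A : Matrix (Fin n) (Fin n) ℝ) : Prop :=
  (∀ i j, 0 ≤ A i j) ∧ (∀ j, ∑ i, A i j = 1) ∧ A.mulVec d = d

def Mset {n : ℕ} (d y : Fin n → ℝ) : Set (Fin n → ℝ) :=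
  {x | ∃ A : Matrix (Fin n) (Fin n) ℝ, dStoch d A ∧ A.mulVec y = x}

noncomputable def Aentry {n : ℕ} (d : Fin n → ℝ) (σ τ : Equiv.Perm (Fin n))
    (α : ℕ → Fin n) (j k : Fin n) : ℝ :=
  if k = α j.val ∧ (α j.val).val < (α (j.val + 1)).val then
    (psum d τ ((α j.val).val + 1) - psum d σ j.val) / d (τ (α j.val))
  else if (α j.val).val < k.val ∧ k.val < (α (j.val + 1)).val then 1
  else if (α j.val).val < (α (j.val + 1)).val ∧ k = α (j.val + 1) then
    (psum d σ (j.val + 1) - psum d τ (α (j.val + 1)).val) / d (τ (α (j.val + 1)))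
  else if α j.val = α (j.val + 1) ∧ k = α (j.val + 1) then
    d (σ j) / d (τ (α (j.val + 1)))
  else 0

noncomputable def Amat {n : ℕ} (d : Fin n → ℝ) (σ τ : Equiv.Perm (Fin n))
    (α : ℕ → Fin n) : Matrix (Fin n) (Fin n) ℝ :=
  Matrix.of fun p q => Aentry d σ τ α (σ.symm p) (τ.symm q)

/-!
For each threshold `t`, the excess `∑ i, (y i - t * d i)⁺` cannot increase under a Gibbs-stochastic
matrix, so `x ≺_d y ≺_d x` forces `x` and `y` to have the same excess for every `t`. The right
derivative of the excess at `t` is minus the sum of `d` over `{i | t * d i < y i}`. If `d` is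
stable, that sum determines the set, and these sets determine `y`.

Conversely, if `I` and `J` have the same `d`-sum, redistributing within `J` and within its
complement in proportion to `d` takes the restriction of `d` to `J` to its restriction to `I`.
The two restrictions thus majorize each other, and antisymmetry forces `I = J`.
-/

open Matrix

section Excess

lemma posPart_mulVec_le {ι κ R : Type*} [Fintype ι] [Ring R] [Lattice R] [IsOrderedRing R]
    {A : Matrix κ ι R} (hA : ∀ i j, 0 ≤ A i j) (v : ι → R) :
    (A *ᵥ v)⁺ ≤ A *ᵥ v⁺ := by
  refine fun i => sup_le ?_ ?_
  · exact sum_le_sum fun j _ => mul_le_mul_of_nonneg_left (le_posPart (v j)) (hA i j)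
  · exact sum_nonneg fun j _ => mul_nonneg (hA i j) (posPart_nonneg (v j))

variable {ι R : Type*} [Fintype ι] [CommRing R] [Lattice R]

/-- The excess of `y` over the multiple `t • d` of the reference vector `d`, a quantity monotone
under thermomajorization. -/
def excess (d y : ι → R) (t : R) : R :=
  ∑ i, ((y - t • d) i)⁺

lemma excess_mulVec_le [IsOrderedRing R] [DecidableEq ι] {A : Matrix ι ι R}
    (hA : A ∈ colStochastic R ι) {d : ι → R} (hAd : A *ᵥ d = d) (y : ι → R) (t : R) :
    excess d (A *ᵥ y) t ≤ excess d y t := by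
  have hshift : A *ᵥ y - t • d = A *ᵥ (y - t • d) := by
    rw [mulVec_sub, mulVec_smul, hAd]
  calc excess d (A *ᵥ y) t
      = ∑ i, (A *ᵥ (y - t • d))⁺ i := by rw [excess, hshift]; rfl
    _ ≤ ∑ i, (A *ᵥ (y - t • d)⁺) i :=
      sum_le_sum fun i _ => posPart_mulVec_le (fun _ _ => nonneg_of_mem_colStochastic hA) _ i
    _ = excess d y t := sum_mulVec_of_mem_colStochastic hA

end Excess

section Superlevel

variable {ι K : Type*} [Fintype ι] [Field K] [LinearOrder K]

/-- The set of indices whose ratio `y i / d i` exceeds `t` (for positive `d`), written without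
division. -/
def superlevel (d y : ι → K) (t : K) : Finset ι :=
  {i | t * d i < y i}

lemma superlevel_injective {d : ι → K} (hd : ∀ i, d i ≠ 0) :
    Function.Injective (superlevel d) := by
  intro x y h
  have hlt (t : K) (i : ι) : t * d i < x i ↔ t * d i < y i := by
    simpa [superlevel] using Finset.ext_iff.1 (congrFun h t) i
  funext i
  refine eq_of_forall_lt_iff fun c => ?_
  simpa only [div_mul_cancel₀ c (hd i)] using hlt (c / d i) i

end Superlevel

section Derivative

variable {ι : Type*} [Fintype ι]

lemma hasDerivWithinAt_posPart_sub_mul {a : ℝ} (ha : 0 ≤ a) (b t : ℝ) :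
    HasDerivWithinAt (fun s => (b - s * a)⁺) (if t * a < b then -a else 0) (Set.Ici t) t := by
  split_ifs with h
  · have hlin : HasDerivAt (fun s => b - s * a) (-a) t := by
      simpa using ((hasDerivAt_id t).mul_const a).const_sub b
    have hpos : ∀ᶠ s in nhds t, 0 < b - s * a :=
      hlin.continuousAt.eventually_const_lt (sub_pos.2 h)
    exact (hlin.congr_of_eventuallyEq
      (hpos.mono fun s hs => posPart_of_nonneg hs.le)).hasDerivWithinAt
  · have hzero : ∀ s ∈ Set.Ici t, (b - s * a)⁺ = 0 := fun s hs =>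
      posPart_of_nonpos <| sub_nonpos.2 <|
        (not_lt.1 h).trans (mul_le_mul_of_nonneg_right hs ha)
    exact (hasDerivWithinAt_const t _ 0).congr_of_mem hzero Set.self_mem_Ici

lemma hasDerivWithinAt_excess {d : ι → ℝ} (hd : ∀ i, 0 ≤ d i) (y : ι → ℝ) (t : ℝ) :
    HasDerivWithinAt (excess d y) (-∑ i ∈ superlevel d y t, d i) (Set.Ici t) t := by
  rw [superlevel, sum_filter, ← sum_neg_distrib]
  simp only [neg_ite, neg_zero]
  exact .fun_sum fun i _ => hasDerivWithinAt_posPart_sub_mul (hd i) (y i) t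

lemma sum_superlevel_eq_of_excess_eq {d x y : ι → ℝ} (hd : ∀ i, 0 ≤ d i)
    (h : excess d x = excess d y) (t : ℝ) :
    ∑ i ∈ superlevel d x t, d i = ∑ i ∈ superlevel d y t, d i :=
  neg_injective <| (uniqueDiffWithinAt_Ici t).eq_deriv _ (hasDerivWithinAt_excess hd x t)
    (h ▸ hasDerivWithinAt_excess hd y t)

end Derivative

section Redistribute

variable {ι κ : Type*} [Fintype ι] [DecidableEq κ]

lemma sum_fiber_pos {M : Type*} [AddCommMonoid M] [PartialOrder M] [IsOrderedCancelAddMonoid M]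
    {d : ι → M} (hd : ∀ i, 0 < d i) (f : ι → κ) (i : ι) : 0 < ∑ k with f k = f i, d k :=
  sum_pos (fun k _ => hd k) ⟨i, by simp⟩

variable {K : Type*} [Field K]

/-- The matrix that redistributes the total on each fibre `g ⁻¹' {a}` over the fibre `f ⁻¹' {a}`
in proportion to the weights `d`. Where the fibre of `f` has total weight `0`, division by zero
makes the row vanish. -/
def redistribute (d : ι → K) (f g : ι → κ) : Matrix ι ι K :=
  .of fun i j => if g j = f i then d i / ∑ k with f k = f i, d k else 0

variable {d : ι → K} {f g : ι → κ}

lemma redistribute_mulVec (hf : ∀ i, ∑ k with f k = f i, d k ≠ 0)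
    (hfg : ∀ a, ∑ k with f k = a, d k = ∑ k with g k = a, d k) (c : κ → K) :
    redistribute d f g *ᵥ (fun j => c (g j) * d j) = fun i => c (f i) * d i := by
  funext i
  have hne := hf i
  calc ∑ j, redistribute d f g i j * (c (g j) * d j)
      = ∑ j with g j = f i, d i / (∑ k with f k = f i, d k) * c (f i) * d j := by
        rw [sum_filter]
        refine sum_congr rfl fun j _ => ?_
        by_cases h : g j = f i <;> simp [redistribute, h, mul_assoc]
    _ = d i / (∑ k with f k = f i, d k) * c (f i) * ∑ k with f k = f i, d k := by
        rw [← mul_sum, hfg]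
    _ = c (f i) * d i := by field_simp

lemma redistribute_mem_colStochastic [LinearOrder K] [IsStrictOrderedRing K] [DecidableEq ι]
    (hd : ∀ i, 0 < d i)
    (hfg : ∀ a, ∑ k with f k = a, d k = ∑ k with g k = a, d k) :
    redistribute d f g ∈ colStochastic K ι := by
  refine mem_colStochastic_iff_sum.2 ⟨fun i j => ?_, fun j => ?_⟩
  · exact ite_nonneg (div_nonneg (hd i).le (sum_fiber_pos hd f i).le) le_rfl
  · calc ∑ i, redistribute d f g i j
        = ∑ i with f i = g j, d i / ∑ k with f k = g j, d k := by
          rw [sum_filter]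
          refine sum_congr rfl fun i _ => ?_
          by_cases h : f i = g j <;> simp [redistribute, h, eq_comm]
      _ = 1 := by
          rw [← sum_div, hfg]
          exact div_self (sum_fiber_pos hd g j).ne'

end Redistribute

section Thermomajorization

variable {n : ℕ} {d : Fin n → ℝ}

lemma dStoch_iff_mem_colStochastic {A : Matrix (Fin n) (Fin n) ℝ} :
    dStoch d A ↔ A ∈ colStochastic ℝ (Fin n) ∧ A *ᵥ d = d := by
  rw [dStoch, mem_colStochastic_iff_sum, and_assoc]

lemma excess_le_of_mem_Mset {x y : Fin n → ℝ} (h : x ∈ Mset d y) :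
    excess d x ≤ excess d y := by
  obtain ⟨A, hA, rfl⟩ := h
  obtain ⟨hcol, hAd⟩ := dStoch_iff_mem_colStochastic.1 hA
  exact excess_mulVec_le hcol hAd y

lemma comp_mul_mem_Mset {κ : Type*} [DecidableEq κ] (hd : ∀ i, 0 < d i) {f g : Fin n → κ}
    (hfg : ∀ a, ∑ k with f k = a, d k = ∑ k with g k = a, d k) (c : κ → ℝ) :
    (fun i => c (f i) * d i) ∈ Mset d fun i => c (g i) * d i := by
  have hmul := redistribute_mulVec (fun i => (sum_fiber_pos hd f i).ne') hfg
  have hfix : redistribute d f g *ᵥ d = d := by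
    simpa only [one_mul] using hmul fun _ => 1
  exact ⟨redistribute d f g,
    dStoch_iff_mem_colStochastic.2 ⟨redistribute_mem_colStochastic hd hfg, hfix⟩, hmul c⟩

lemma indicator_mem_Mset (hd : ∀ i, 0 < d i) {I J : Finset (Fin n)}
    (hIJ : ∑ i ∈ I, d i = ∑ i ∈ J, d i) :
    (I : Set (Fin n)).indicator d ∈ Mset d ((J : Set (Fin n)).indicator d) := by
  have hcompl : ∑ i ∈ Iᶜ, d i = ∑ i ∈ Jᶜ, d i := by
    linarith [sum_add_sum_compl I d, sum_add_sum_compl J d]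
  have hfiber (b : Bool) : ∑ k with decide (k ∈ I) = b, d k = ∑ k with decide (k ∈ J) = b, d k := by
    cases b
    · simpa [filter_notMem_eq_sdiff, ← compl_eq_univ_sdiff] using hcompl
    · simpa using hIJ
  have hind (S : Finset (Fin n)) :
      (S : Set (Fin n)).indicator d = fun i => (if decide (i ∈ S) then 1 else 0) * d i := by
    funext i
    simp [Set.indicator_apply]
  rw [hind, hind]
  exact comp_mul_mem_Mset hd hfiber fun b => if b then 1 else 0

end Thermomajorization

/-- d is stable iff thermomajorization ≺_d is antisymmetric (a partial order). -/
theorem stmt9 (n : ℕ) (hn : 1 ≤ n) (d : Fin n → ℝ) (hd : ∀ i, 0 < d i) :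
    (Function.Injective fun I : Finset (Fin n) => ∑ i ∈ I, d i) ↔
      ∀ x y : Fin n → ℝ, x ∈ Mset d y → y ∈ Mset d x → x = y := by
  constructor
  · intro hstable x y hxy hyx
    have hexcess : excess d x = excess d y :=
      (excess_le_of_mem_Mset hxy).antisymm (excess_le_of_mem_Mset hyx)
    refine superlevel_injective (fun i => (hd i).ne') (funext fun t => hstable ?_)
    exact sum_superlevel_eq_of_excess_eq (fun i => (hd i).le) hexcess t
  · intro hantisymm I J hIJ
    have hind : (I : Set (Fin n)).indicator d = (J : Set (Fin n)).indicator d :=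
      hantisymm _ _ (indicator_mem_Mset hd hIJ) (indicator_mem_Mset hd hIJ.symm)
    have hsupp : Function.support d = Set.univ :=
      Set.eq_univ_of_forall fun i => (hd i).ne'
    simpa [hsupp] using congrArg Function.support hind
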